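/- The exact solution of the paper's numerical example does not belong to H¹ of its domain: with Ω = (−1,1) × (0,1) and u(x,y) = exp(−(x² + y²))·arg(x,y), the function u is differentiable at every point of Ω, but the function p ↦ ‖∇u(p)‖² is not Lebesgue-integrable on Ω (its integral is infinite); hence u ∉ H¹(Ω). -/

import Mathlib

/-!
In polar coordinates `u = e^{-r²} θ`, so `|∇u|² = u_r² + r⁻² u_θ² = e^{-2r²} (4 r² θ² + r⁻²)`.
On `Ω` one has `r² ≤ 2`, hence `|∇u|² ≥ e^{-4} / r²`, and `1 / r²` is not integrable at the
origin of a half-plane.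

The partial derivatives are computed in Cartesian coordinates from `arg = Im log`, which is
differentiable on the upper half-plane (`hasDerivAt_planeArg_fst`, `hasDerivAt_planeArg_snd`).
The divergence is obtained by Tonelli: for `0 < x < 1`, restricting the inner integral of
`1 / (x² + y²)` to `0 < y < x` bounds it below by `x · 1 / (2x²) = 1 / (2x)`, whose integral
over `(0, 1)` is infinite.
-/

open Real MeasureTheory

/-- The principal argument as a function of Cartesian coordinates `(x, y)`. -/
noncomputable def planeArg (x y : ℝ) : ℝ := Complex.arg ((x : ℂ) + (y : ℂ) * Complex.I)

/-- The exact solution of the paper's numerical example: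
`u(x,y) = exp(−(x²+y²))·arg(x,y)`, i.e. `u = e^{−r²} θ` in polar coordinates. -/
noncomputable def exampleSol (x y : ℝ) : ℝ := Real.exp (-(x ^ 2 + y ^ 2)) * planeArg x y

lemma ofReal_add_mul_I_mem_slitPlane {x y : ℝ} (hy : 0 < y) :
    (x : ℂ) + (y : ℂ) * Complex.I ∈ Complex.slitPlane := by
  right
  simp [hy.ne']

lemma differentiableAt_exampleSol {p : ℝ × ℝ} (hy : 0 < p.2) :
    DifferentiableAt ℝ (fun q : ℝ × ℝ => exampleSol q.1 q.2) p := by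
  have hz : DifferentiableAt ℝ
      (fun q : ℝ × ℝ => (q.1 : ℂ) + (q.2 : ℂ) * Complex.I) p :=
    (Complex.ofRealCLM.differentiableAt.comp p differentiableAt_fst).add
      ((Complex.ofRealCLM.differentiableAt.comp p differentiableAt_snd).mul_const _)
  have hlog : DifferentiableAt ℝ
      (fun q : ℝ × ℝ => Complex.log ((q.1 : ℂ) + (q.2 : ℂ) * Complex.I)) p :=
    ((Complex.hasStrictDerivAt_log
      (ofReal_add_mul_I_mem_slitPlane hy)).hasDerivAt.differentiableAt.restrictScalars ℝ).fun_comp' p hz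
  have harg : DifferentiableAt ℝ (fun q : ℝ × ℝ => planeArg q.1 q.2) p := by
    have := Complex.imCLM.differentiableAt.comp p hlog
    simpa [planeArg, Function.comp_def, Complex.log_im] using this
  unfold exampleSol
  fun_prop

lemma hasDerivAt_planeArg_fst {x y : ℝ} (hy : 0 < y) :
    HasDerivAt (fun s => planeArg s y) (-y / (x ^ 2 + y ^ 2)) x := by
  have hz : HasDerivAt (fun s : ℝ => (s : ℂ) + (y : ℂ) * Complex.I) 1 x :=
    (Complex.ofRealCLM.hasDerivAt (x := x)).add_const _
  have h := Complex.imCLM.hasFDerivAt.comp_hasDerivAt x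
    (hz.clog_real (ofReal_add_mul_I_mem_slitPlane hy))
  have hf : (fun s => planeArg s y) =
      Complex.imCLM ∘ fun s : ℝ => Complex.log ((s : ℂ) + (y : ℂ) * Complex.I) := by
    funext s
    simp [planeArg, Complex.log_im]
  rw [hf]
  refine h.congr_deriv ?_
  simp [Complex.normSq_apply, pow_two, neg_div]

lemma hasDerivAt_planeArg_snd {x y : ℝ} (hy : 0 < y) :
    HasDerivAt (fun t => planeArg x t) (x / (x ^ 2 + y ^ 2)) y := by
  have hz : HasDerivAt (fun t : ℝ => (x : ℂ) + (t : ℂ) * Complex.I) (1 * Complex.I) y :=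
    ((Complex.ofRealCLM.hasDerivAt (x := y)).mul_const _).const_add _
  have h := Complex.imCLM.hasFDerivAt.comp_hasDerivAt y
    (hz.clog_real (ofReal_add_mul_I_mem_slitPlane hy))
  have hf : (fun t => planeArg x t) =
      Complex.imCLM ∘ fun t : ℝ => Complex.log ((x : ℂ) + (t : ℂ) * Complex.I) := by
    funext t
    simp [planeArg, Complex.log_im]
  rw [hf]
  refine h.congr_deriv ?_
  simp [Complex.div_im, Complex.normSq_apply, pow_two]

/-- The Cartesian form of `|∇u|² = e^{-2r²} (4 r² θ² + r⁻²)`. -/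
lemma gradient_sq_eq {x y : ℝ} (hy : 0 < y) :
    (deriv (fun s : ℝ => exampleSol s y) x) ^ 2 + (deriv (fun t : ℝ => exampleSol x t) y) ^ 2
      = Real.exp (-(x ^ 2 + y ^ 2)) ^ 2
        * (4 * (x ^ 2 + y ^ 2) * planeArg x y ^ 2 + 1 / (x ^ 2 + y ^ 2)) := by
  have hr : x ^ 2 + y ^ 2 ≠ 0 := by positivity
  have h1 : HasDerivAt (fun s : ℝ => exampleSol s y) _ x :=
    ((((hasDerivAt_id x).pow 2).add_const (y ^ 2)).neg.exp).mul (hasDerivAt_planeArg_fst hy)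
  have h2 : HasDerivAt (fun t : ℝ => exampleSol x t) _ y :=
    ((((hasDerivAt_id y).pow 2).const_add (x ^ 2)).neg.exp).mul (hasDerivAt_planeArg_snd hy)
  rw [h1.deriv, h2.deriv]
  simp only [id, Pi.pow_apply, Pi.neg_apply, Nat.cast_ofNat, Nat.add_one_sub_one, pow_one, mul_one]
  field_simp
  ring

lemma gradient_sq_ge {x y : ℝ} (hx : x ∈ Set.Ioo (-1 : ℝ) 1) (hy : y ∈ Set.Ioo (0 : ℝ) 1) :
    Real.exp (-2) ^ 2 * (1 / (x ^ 2 + y ^ 2)) ≤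
      (deriv (fun s : ℝ => exampleSol s y) x) ^ 2
        + (deriv (fun t : ℝ => exampleSol x t) y) ^ 2 := by
  obtain ⟨hx1, hx2⟩ := hx
  obtain ⟨hy1, hy2⟩ := hy
  rw [gradient_sq_eq hy1]
  have hexp : Real.exp (-2) ≤ Real.exp (-(x ^ 2 + y ^ 2)) :=
    Real.exp_le_exp.2 (by nlinarith)
  gcongr
  exact le_add_of_nonneg_left (by positivity)

lemma lintegral_const_div_eq_top {c : ℝ} (hc : 0 < c) :
    ∫⁻ x in Set.Ioo (0 : ℝ) 1, ENNReal.ofReal (c * x⁻¹) = ⊤ := by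
  by_contra h
  have hint : IntegrableOn (fun x : ℝ => c * x⁻¹) (Set.Ioo 0 1) := by
    refine (lintegral_ofReal_ne_top_iff_integrable (by fun_prop) ?_).1 h
    filter_upwards [ae_restrict_mem measurableSet_Ioo] with x hx
    have := hx.1
    simp only [Pi.zero_apply]
    positivity
  have hinv : IntegrableOn (fun x : ℝ => x⁻¹) (Set.Ioo 0 1) := by
    have := hint.const_mul c⁻¹
    simpa [IntegrableOn, ← mul_assoc, inv_mul_cancel₀ hc.ne'] using this
  rw [← integrableOn_Ioc_iff_integrableOn_Ioo,
    ← intervalIntegrable_iff_integrableOn_Ioc_of_le zero_le_one, intervalIntegrable_inv_iff] at hinv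
  simp at hinv

lemma lintegral_const_div_sq_eq_top {c : ℝ} (hc : 0 < c) :
    ∫⁻ p in (Set.Ioo (-1 : ℝ) 1 ×ˢ Set.Ioo (0 : ℝ) 1),
      ENNReal.ofReal (c * (1 / (p.1 ^ 2 + p.2 ^ 2))) = ⊤ := by
  rw [Measure.volume_eq_prod, ← Measure.prod_restrict, lintegral_prod _ (by fun_prop), eq_top_iff,
    ← lintegral_const_div_eq_top (half_pos hc)]
  refine le_trans ?_ (lintegral_mono_set (Set.Ioo_subset_Ioo_left (by norm_num : (-1 : ℝ) ≤ 0)))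
  refine setLIntegral_mono' measurableSet_Ioo fun x hx => ?_
  obtain ⟨hx0, hx1⟩ := hx
  calc ENNReal.ofReal (c / 2 * x⁻¹)
      = ∫⁻ _ in Set.Ioo 0 x, ENNReal.ofReal (c * (1 / (2 * x ^ 2))) := by
        rw [setLIntegral_const, Real.volume_Ioo, ← ENNReal.ofReal_mul (by positivity)]
        congr 1
        field_simp
        ring
    _ ≤ ∫⁻ y in Set.Ioo 0 x, ENNReal.ofReal (c * (1 / (x ^ 2 + y ^ 2))) := by
        refine setLIntegral_mono' measurableSet_Ioo fun y hy => ?_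
        obtain ⟨hy0, hyx⟩ := hy
        gcongr
        nlinarith
    _ ≤ _ := lintegral_mono_set (Set.Ioo_subset_Ioo_right hx1.le)

lemma lintegral_gradient_sq_eq_top :
    ∫⁻ p in (Set.Ioo (-1 : ℝ) 1 ×ˢ Set.Ioo (0 : ℝ) 1),
        ENNReal.ofReal
          ((deriv (fun s : ℝ => exampleSol s p.2) p.1) ^ 2
            + (deriv (fun t : ℝ => exampleSol p.1 t) p.2) ^ 2) = ⊤ := by
  rw [eq_top_iff, ← lintegral_const_div_sq_eq_top (c := Real.exp (-2) ^ 2) (by positivity)]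
  exact setLIntegral_mono' (measurableSet_Ioo.prod measurableSet_Ioo) fun p hp =>
    ENNReal.ofReal_le_ofReal (gradient_sq_ge hp.1 hp.2)

/-- The example solution does not belong to `H¹(Ω)` for `Ω = (−1,1) × (0,1)`:
`u` is differentiable at every point of `Ω`, but the squared Euclidean norm of its
gradient, `(∂u/∂x)² + (∂u/∂y)²`, is not Lebesgue-integrable on `Ω` — indeed its
integral is infinite. -/
theorem exampleSol_not_H1 :
    (∀ p ∈ (Set.Ioo (-1 : ℝ) 1 ×ˢ Set.Ioo (0 : ℝ) 1),
      DifferentiableAt ℝ (fun q : ℝ × ℝ => exampleSol q.1 q.2) p) ∧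
    ¬ IntegrableOn
        (fun p : ℝ × ℝ =>
          (deriv (fun s : ℝ => exampleSol s p.2) p.1) ^ 2
            + (deriv (fun t : ℝ => exampleSol p.1 t) p.2) ^ 2)
        (Set.Ioo (-1 : ℝ) 1 ×ˢ Set.Ioo (0 : ℝ) 1) ∧
    ∫⁻ p in (Set.Ioo (-1 : ℝ) 1 ×ˢ Set.Ioo (0 : ℝ) 1),
        ENNReal.ofReal
          ((deriv (fun s : ℝ => exampleSol s p.2) p.1) ^ 2
            + (deriv (fun t : ℝ => exampleSol p.1 t) p.2) ^ 2) = ⊤ := by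
  refine ⟨fun p hp => differentiableAt_exampleSol hp.2.1, fun h => ?_,
    lintegral_gradient_sq_eq_top⟩
  exact h.lintegral_lt_top.ne lintegral_gradient_sq_eq_top
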